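/- Let (G, sat) be an instance with strict cardinal preferences. Then all ordinally stable fractional matchings of (G, sat) match exactly the same set of agents: for any two ordinally stable fractional matchings M and M' and any agent v, v is matched under M if and only if v is matched under M'. In particular, the agents are partitioned into those that are (fully) matched in every ordinally stable fractional matching and those that are matched in none. -/

import Mathlib

/-!
Write `d v` and `d' v` for the total weight that linearly stable matchings `M` and `M'` put on `v`.
Weight the stability inequality `1 ≤ M(u, ≽ v) + M(v, ≽ u) - M u v` of an edge by `M' u v`, sum over
all ordered pairs, exchange the roles of `M` and `M'`, and add. At each agent, strictness makes any
two distinct neighbours comparable in exactly one direction, so the products `M * M'` recombine into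
`d v * d' v`, and what remains is `∑ v, (d v * (1 - d' v) + d' v * (1 - d v)) ≤ 0`. Every summand is
nonnegative, hence zero, so `0 < d v` forces `d' v = 1`.
-/

open Finset
open scoped Classical

variable {V : Type*}

/-- Two agents find each other acceptable iff at least one of them assigns
positive satisfaction to the other. -/
def Adj (sat : V → V → ℚ) (u v : V) : Prop :=
  0 < sat u v ∨ 0 < sat v u

instance (sat : V → V → ℚ) (u v : V) : Decidable (Adj sat u v) :=
  inferInstanceAs (Decidable (0 < sat u v ∨ 0 < sat v u))

/-- `sat` describes a valid instance: satisfactions are nonnegative, an agent has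
zero satisfaction towards itself, and the acceptability graph has no isolated vertices. -/
structure IsInstance [Fintype V] (sat : V → V → ℚ) : Prop where
  nonneg : ∀ u v, 0 ≤ sat u v
  sat_self : ∀ u, sat u u = 0
  noIsolated : ∀ v, ∃ u, Adj sat v u

/-- `M` is a fractional matching of the acceptability graph of `sat`. -/
structure IsMatching [Fintype V] (sat : V → V → ℚ) (M : V → V → ℝ) : Prop where
  symm : ∀ u v, M u v = M v u
  nonneg : ∀ u v, 0 ≤ M u v
  support : ∀ u v, ¬ Adj sat u v → M u v = 0
  degree_le_one : ∀ v, ∑ u, M v u ≤ 1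

/-- `M(x, ≽ y)`: total matching value of `x` with neighbours liked at least as much as `y`. -/
noncomputable def wge [Fintype V] (sat : V → V → ℚ) (M : V → V → ℝ) (x y : V) : ℝ :=
  ∑ z ∈ Finset.univ.filter (fun z => Adj sat x z ∧ sat x y ≤ sat x z), M x z

/-- `M(x, ≻ y)`: total matching value of `x` with neighbours strictly preferred to `y`. -/
noncomputable def wgt [Fintype V] (sat : V → V → ℚ) (M : V → V → ℝ) (x y : V) : ℝ :=
  ∑ z ∈ Finset.univ.filter (fun z => Adj sat x z ∧ sat x y < sat x z), M x z

/-- Utility of agent `v` under matching `M`. -/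
noncomputable def util [Fintype V] (sat : V → V → ℚ) (M : V → V → ℝ) (v : V) : ℝ :=
  ∑ u, (sat v u : ℝ) * M v u

/-- Social welfare of a matching. -/
noncomputable def welfare [Fintype V] (sat : V → V → ℚ) (M : V → V → ℝ) : ℝ :=
  ∑ v, util sat M v

/-- Ordinal stability: no edge is ordinally blocking. -/
def OrdStable [Fintype V] (sat : V → V → ℚ) (M : V → V → ℝ) : Prop :=
  ∀ u v, Adj sat u v → ¬ (wge sat M u v < 1 ∧ wge sat M v u < 1)

/-- Cardinal stability: no edge is cardinally blocking. -/
def CardStable [Fintype V] (sat : V → V → ℚ) (M : V → V → ℝ) : Prop :=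
  ∀ u v, Adj sat u v → ¬ (util sat M u < (sat u v : ℝ) ∧ util sat M v < (sat v u : ℝ))

/-- Linear stability: no edge is linearly blocking. -/
def LinStable [Fintype V] (sat : V → V → ℚ) (M : V → V → ℝ) : Prop :=
  ∀ u v, Adj sat u v → ¬ (wge sat M u v + wge sat M v u - M u v < 1)

/-- Strict preferences: no ties among distinct neighbours. -/
def StrictPrefs (sat : V → V → ℚ) : Prop :=
  ∀ v x y, Adj sat v x → Adj sat v y → x ≠ y → sat v x ≠ sat v y

/-- The acceptability graph is bipartite with parts `U` and its complement. -/
def BipartiteWith (sat : V → V → ℚ) (U : Set V) : Prop :=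
  ∀ u v, Adj sat u v → (u ∈ U ↔ v ∉ U)

/-- Integral matching. -/
def IntegralMatching (M : V → V → ℝ) : Prop := ∀ u v, M u v = 0 ∨ M u v = 1

/-- Number of fully matched agents. -/
noncomputable def nfully [Fintype V] (M : V → V → ℝ) : ℕ :=
  (Finset.univ.filter (fun v => ∑ u, M v u = (1 : ℝ))).card

section WeightedComparison

variable {ι α R : Type*} [LinearOrder α] {s : Finset ι} {r : ι → α}

theorem sum_filter_le_add_sum_filter_ge [AddCommMonoid R] (hr : Set.InjOn r s) (g : ι → R) {i : ι}
    (hi : i ∈ s) :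
    ∑ j ∈ s with r j ≤ r i, g j + ∑ j ∈ s with r i ≤ r j, g j = ∑ j ∈ s, g j + g i := by
  have hunion : {j ∈ s | r j ≤ r i} ∪ {j ∈ s | r i ≤ r j} = s := by
    rw [← filter_or, filter_true_of_mem fun j _ => le_total (r j) (r i)]
  have hinter : {j ∈ s | r j ≤ r i} ∩ {j ∈ s | r i ≤ r j} = {i} := by
    ext j
    simp only [mem_inter, mem_filter, mem_singleton]
    refine ⟨fun ⟨⟨hj, hle⟩, _, hge⟩ => hr hj hi (le_antisymm hle hge), ?_⟩
    rintro rfl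
    exact ⟨⟨hi, le_rfl⟩, hi, le_rfl⟩
  rw [← sum_union_inter, hunion, hinter, sum_singleton]

theorem sum_mul_sum_filter_ge_add [NonUnitalNonAssocCommSemiring R] (hr : Set.InjOn r s)
    (f g : ι → R) :
    ∑ i ∈ s, g i * ∑ j ∈ s with r i ≤ r j, f j + ∑ i ∈ s, f i * ∑ j ∈ s with r i ≤ r j, g j =
      (∑ i ∈ s, f i) * ∑ i ∈ s, g i + ∑ i ∈ s, f i * g i := by
  have hswap : ∑ i ∈ s, g i * ∑ j ∈ s with r i ≤ r j, f j =
      ∑ i ∈ s, f i * ∑ j ∈ s with r j ≤ r i, g j := by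
    simp only [mul_sum, mul_comm (g _) (f _)]
    exact sum_comm' fun i j => by simp only [mem_filter]; tauto
  calc
    _ = ∑ i ∈ s, f i * (∑ j ∈ s with r j ≤ r i, g j + ∑ j ∈ s with r i ≤ r j, g j) := by
      simp only [hswap, mul_add, sum_add_distrib]
    _ = ∑ i ∈ s, f i * (∑ j ∈ s, g j + g i) :=
      sum_congr rfl fun i hi => by rw [sum_filter_le_add_sum_filter_ge hr g hi]
    _ = _ := by simp only [mul_add, sum_add_distrib, sum_mul]

end WeightedComparison

theorem Adj.symm {sat : V → V → ℚ} {u v : V} (h : Adj sat u v) : Adj sat v u :=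
  Or.symm h

theorem StrictPrefs.injOn {sat : V → V → ℚ} (hstrict : StrictPrefs sat) (v : V) :
    Set.InjOn (sat v) {u | Adj sat v u} := fun x hx y hy hxy => by
  by_contra hne
  exact hstrict v x y hx hy hne hxy

section Matching

variable [Fintype V] {sat : V → V → ℚ} {M M' : V → V → ℝ}

theorem IsMatching.le_wge (hM : IsMatching sat M) {u v : V} (h : Adj sat u v) :
    M u v ≤ wge sat M u v :=
  single_le_sum (f := M u) (fun z _ => hM.nonneg u z) (by simp [h])

theorem OrdStable.linStable (hS : OrdStable sat M) (hM : IsMatching sat M) : LinStable sat M := by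
  intro u v h hlt
  have hu : M u v ≤ wge sat M u v := hM.le_wge h
  have hv : M u v ≤ wge sat M v u := hM.symm u v ▸ hM.le_wge h.symm
  exact hS u v h ⟨by linarith, by linarith⟩

theorem IsMatching.sum_adj_mul (hM : IsMatching sat M) (v : V) (f : V → ℝ) :
    ∑ u with Adj sat v u, M v u * f u = ∑ u, M v u * f u :=
  sum_filter_of_ne fun u _ hu => by
    by_contra h
    exact hu (by rw [hM.support v u h, zero_mul])

theorem IsMatching.sum_adj (hM : IsMatching sat M) (v : V) :
    ∑ u with Adj sat v u, M v u = ∑ u, M v u := by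
  simpa only [mul_one] using hM.sum_adj_mul v fun _ => 1

theorem sum_mul_wge_add_sum_mul_wge (hstrict : StrictPrefs sat) (hM : IsMatching sat M)
    (hM' : IsMatching sat M') (v : V) :
    ∑ u, M' v u * wge sat M v u + ∑ u, M v u * wge sat M' v u =
      (∑ u, M v u) * ∑ u, M' v u + ∑ u, M v u * M' v u := by
  have hinj : Set.InjOn (sat v) ({u | Adj sat v u} : Finset V) := by
    simpa using hstrict.injOn v
  simpa only [wge, filter_filter, hM.sum_adj_mul, hM'.sum_adj_mul, hM.sum_adj, hM'.sum_adj]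
    using sum_mul_sum_filter_ge_add hinj (M v) (M' v)

theorem LinStable.sum_add_sum_mul_le (hS : LinStable sat M) (hM' : IsMatching sat M') :
    ∑ v, ∑ u, M' v u + ∑ v, ∑ u, M v u * M' v u ≤ 2 * ∑ v, ∑ u, M' v u * wge sat M v u := by
  have hswap : ∑ v, ∑ u, M' v u * wge sat M u v = ∑ v, ∑ u, M' v u * wge sat M v u := by
    rw [sum_comm]
    simp only [hM'.symm]
  have hedge (v u : V) :
      M' v u + M v u * M' v u ≤ M' v u * wge sat M v u + M' v u * wge sat M u v := by
    by_cases h : Adj sat v u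
    · linarith [mul_le_mul_of_nonneg_left (not_lt.1 (hS v u h)) (hM'.nonneg v u)]
    · simp [hM'.support v u h]
  calc
    _ = ∑ v, ∑ u, (M' v u + M v u * M' v u) := by simp only [sum_add_distrib]
    _ ≤ ∑ v, ∑ u, (M' v u * wge sat M v u + M' v u * wge sat M u v) :=
      sum_le_sum fun v _ => sum_le_sum fun u _ => hedge v u
    _ = _ := by simp only [sum_add_distrib, hswap, two_mul]

theorem LinStable.sum_mul_one_sub_add_nonpos (hstrict : StrictPrefs sat) (hM : IsMatching sat M)
    (hM' : IsMatching sat M') (hS : LinStable sat M) (hS' : LinStable sat M') :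
    ∑ v, ((∑ u, M v u) * (1 - ∑ u, M' v u) + (∑ u, M' v u) * (1 - ∑ u, M v u)) ≤ 0 := by
  have hle := hS.sum_add_sum_mul_le hM'
  have hle' := hS'.sum_add_sum_mul_le hM
  have hpair : ∑ v, ∑ u, M' v u * wge sat M v u + ∑ v, ∑ u, M v u * wge sat M' v u =
      ∑ v, (∑ u, M v u) * ∑ u, M' v u + ∑ v, ∑ u, M v u * M' v u := by
    simp only [← sum_add_distrib, sum_mul_wge_add_sum_mul_wge hstrict hM hM']
  simp only [mul_sub, mul_one, sum_add_distrib, sum_sub_distrib, mul_comm (M' _ _) (M _ _),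
    mul_comm (∑ u, M' _ u) (∑ u, M _ u)] at hle' ⊢
  linarith

theorem LinStable.sum_eq_one_of_sum_pos (hstrict : StrictPrefs sat) (hM : IsMatching sat M)
    (hM' : IsMatching sat M') (hS : LinStable sat M) (hS' : LinStable sat M') {v : V}
    (hv : 0 < ∑ u, M v u) : ∑ u, M' v u = 1 := by
  have hnonneg {N N' : V → V → ℝ} (hN : IsMatching sat N) (hN' : IsMatching sat N') (w : V) :
      0 ≤ (∑ u, N w u) * (1 - ∑ u, N' w u) :=
    mul_nonneg (sum_nonneg fun u _ => hN.nonneg w u) (sub_nonneg.2 (hN'.degree_le_one w))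
  have hterm : (∑ u, M v u) * (1 - ∑ u, M' v u) + (∑ u, M' v u) * (1 - ∑ u, M v u) ≤ 0 :=
    (single_le_sum (fun w _ => add_nonneg (hnonneg hM hM' w) (hnonneg hM' hM w))
      (mem_univ v)).trans (sum_mul_one_sub_add_nonpos hstrict hM hM' hS hS')
  have hprod : (∑ u, M v u) * (1 - ∑ u, M' v u) ≤ 0 := by linarith [hnonneg hM' hM v]
  exact le_antisymm (hM'.degree_le_one v) (sub_nonpos.1 (nonpos_of_mul_nonpos_right hprod hv))

theorem ordinallyStable_same_matched_agents_general (hstrict : StrictPrefs sat)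
    (hM : IsMatching sat M) (hM' : IsMatching sat M') (hS : LinStable sat M)
    (hS' : LinStable sat M') (v : V) : 0 < ∑ u, M v u ↔ ∑ u, M' v u = 1 :=
  ⟨hS.sum_eq_one_of_sum_pos hstrict hM hM' hS', fun hv =>
    (hS'.sum_eq_one_of_sum_pos hstrict hM' hM hS (hv ▸ one_pos)).symm ▸ one_pos⟩

end Matching

/-- under strict preferences, all ordinally stable fractional matchings
match exactly the same set of agents. -/
theorem ordinallyStable_same_matched_agents [Fintype V]
    (sat : V → V → ℚ) (hinst : IsInstance sat) (hstrict : StrictPrefs sat) :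
    ∀ M M' : V → V → ℝ,
      IsMatching sat M → IsMatching sat M' → OrdStable sat M → OrdStable sat M' →
      ∀ v, (0 < ∑ u, M v u ↔ 0 < ∑ u, M' v u) := fun _ _ hM hM' hS hS' v =>
  (ordinallyStable_same_matched_agents_general hstrict hM hM' (hS.linStable hM)
    (hS'.linStable hM') v).trans
  (ordinallyStable_same_matched_agents_general hstrict hM' hM' (hS'.linStable hM')
    (hS'.linStable hM') v).symm
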